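/- Fix a constant γ with 0 < γ < 1/2. (i) For every α > 0 there exist β > 0 and d₀ ∈ ℕ such that for all d ≥ d₀ and every unit vector w ∈ ℝ^d, if g is a standard Gaussian vector in ℝ^d and v := g/‖g‖₂, then Pr[⟨v, w⟩ ≥ α·d^{−γ}] ≥ e^{−β·d^{1−2γ}}. (ii) For every α > 0 there exist β' > 0 and d₀' ∈ ℕ such that for all d ≥ d₀' and every unit vector w ∈ ℝ^d, Pr[⟨v, w⟩ ≤ α·d^{−γ}] ≥ 1 − e^{−β'·d^{1−2γ}}. -/

import Mathlib

open MeasureTheory ProbabilityTheory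

/-- The Euclidean norm on `ℝ^n`. -/
noncomputable def e2norm {n : ℕ} (v : Fin n → ℝ) : ℝ := Real.sqrt (∑ i, v i ^ 2)

/-- The standard Gaussian measure `N(0, I_n)` on `ℝ^n`. -/
noncomputable def stdGaussian (n : ℕ) : Measure (Fin n → ℝ) :=
  Measure.pi fun _ => gaussianReal 0 1

/-!
On a finite-dimensional inner product space `E` the standard Gaussian `g` is rotation invariant,
so in an orthonormal basis containing the unit vector `u` every diagonal quadratic form in `g` has
an explicit exponential moment. This yields two non-asymptotic bounds at level `t`, of order
`exp (-Θ(t ^ 2 * finrank ℝ E))`; both parts are the case `t = α * d ^ (-γ)`, where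
`d * t ^ 2 = α ^ 2 * d ^ (1 - 2 * γ)`.

* Upper tail: `t * ‖g‖ < ⟪u, g⟫` forces `0 ≤ ⟪u, g⟫ ^ 2 - t ^ 2 * ‖g‖ ^ 2`, a diagonal form, and
  Chernoff's bound for it loses only a factor `2`. That factor is exactly recovered by the symmetry
  `g ↦ -g`.
* Lower tail: `⟪u, g⟫` is a standard real Gaussian, which exceeds `2 * t * √(finrank ℝ E)` with
  probability at least `exp (-(4 * t ^ 2 * finrank ℝ E + 2))`, while
  `‖g‖ < 2 * √(finrank ℝ E)` outside an event of probability `exp (-finrank ℝ E / 2)`, which is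
  negligible because `d ^ (1 - 2 * γ) = o(d)`.
-/

open Filter Module Real
open scoped NNReal RealInnerProductSpace

theorem exp_le_one_add_two_mul {x : ℝ} (hx0 : 0 ≤ x) (hx1 : x ≤ 1) : exp x ≤ 1 + 2 * x := by
  have h := (abs_le.1 (abs_exp_sub_one_le ((abs_of_nonneg hx0).trans_le hx1))).2
  rw [abs_of_nonneg hx0] at h
  linarith

theorem two_mul_exp_le_exp {x y : ℝ} (h : x + 1 ≤ y) : 2 * exp x ≤ exp y := by
  calc 2 * exp x ≤ exp 1 * exp x := by
        gcongr
        linarith [add_one_le_exp 1]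
    _ = exp (x + 1) := by rw [← exp_add, add_comm]
    _ ≤ exp y := exp_le_exp.2 h

theorem inv_sqrt_le_mul_exp_neg_half {c x y : ℝ} (hc : 0 < c) (h : exp x ≤ c ^ 2 * y) :
    (√y)⁻¹ ≤ c * exp (-(x / 2)) := by
  have hsqrt : exp (x / 2) ≤ c * √y := by
    rw [exp_half, ← sqrt_sq hc.le, ← sqrt_mul (sq_nonneg c)]
    exact sqrt_le_sqrt h
  have hy : 0 < √y := pos_of_mul_pos_right ((exp_pos _).trans_le hsqrt) hc.le
  rw [exp_neg, ← div_eq_mul_inv, inv_le_comm₀ hy (by positivity), inv_div]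
  exact (div_le_iff₀' hc).2 hsqrt

theorem exists_orthonormalBasis_apply_eq {E : Type*} [NormedAddCommGroup E]
    [InnerProductSpace ℝ E] [FiniteDimensional ℝ E] {u : E} (hu : ‖u‖ = 1) :
    ∃ (s : Finset E) (b : OrthonormalBasis s ℝ E) (i : s), b i = u := by
  have horth : Orthonormal ℝ ((↑) : ({u} : Set E) → E) :=
    orthonormal_subsingleton_iff.2 (by simpa using hu)
  obtain ⟨s, b, hus, hb⟩ := horth.exists_orthonormalBasis_extension
  exact ⟨s, b, ⟨u, hus rfl⟩, by rw [hb]⟩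

theorem integral_exp_mul_sq_gaussianReal {v : ℝ≥0} {a : ℝ} (ha : 2 * v * a < 1) :
    ∫ x, exp (a * x ^ 2) ∂gaussianReal 0 v = (√(1 - 2 * v * a))⁻¹ := by
  obtain rfl | hv := eq_or_ne v 0
  · simp
  have : (0 : ℝ) < v := by positivity
  have hpdf (x : ℝ) : gaussianPDFReal 0 v x • exp (a * x ^ 2) =
      (√(2 * π * v))⁻¹ * exp (-((1 - 2 * v * a) / (2 * v)) * x ^ 2) := by
    rw [gaussianPDFReal, smul_eq_mul, mul_assoc, ← exp_add]
    congr 2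
    field_simp
    ring
  rw [integral_gaussianReal_eq_integral_smul hv]
  simp_rw [hpdf]
  rw [integral_const_mul, integral_gaussian, ← sqrt_inv, ← sqrt_inv, ← sqrt_mul (by positivity)]
  congr 1
  have : 1 - 2 * v * a ≠ 0 := by linarith
  field_simp

theorem exp_neg_sq_add_two_le_gaussianReal_Ici (s : ℝ) :
    exp (-(s ^ 2 + 2)) ≤ (gaussianReal 0 1).real (Set.Ici s) := by
  have hsqrt : √(2 * π) ≤ exp 1 := by
    apply sqrt_le_iff.2 ⟨(exp_pos 1).le, _⟩
    nlinarith [pi_lt_d2, exp_one_gt_d9]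
  have hpdf : ∀ x ∈ Set.Icc s (s + 1), exp (-(s ^ 2 + 2)) ≤ gaussianPDFReal 0 1 x := by
    rintro x ⟨hsx, hxs⟩
    calc exp (-(s ^ 2 + 2)) = (exp 1)⁻¹ * exp (-(s ^ 2 + 1)) := by
          rw [← exp_neg, ← exp_add]
          ring_nf
      _ ≤ (√(2 * π))⁻¹ * exp (-x ^ 2 / 2) := by
          have hdist : (x - s) ^ 2 ≤ 1 := pow_le_one₀ (by linarith) (by linarith)
          gcongr
          linarith [sq_nonneg (s - (x - s))]
      _ = gaussianPDFReal 0 1 x := by simp [gaussianPDFReal]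
  calc exp (-(s ^ 2 + 2)) = ∫ _ in Set.Icc s (s + 1), exp (-(s ^ 2 + 2)) := by simp
    _ ≤ ∫ x in Set.Icc s (s + 1), gaussianPDFReal 0 1 x :=
        setIntegral_mono_on (by simp) (integrable_gaussianPDFReal 0 1).integrableOn
          measurableSet_Icc hpdf
    _ = (gaussianReal 0 1).real (Set.Icc s (s + 1)) := by
        rw [measureReal_def, gaussianReal_apply_eq_integral _ one_ne_zero, ENNReal.toReal_ofReal
          (integral_nonneg fun x ↦ gaussianPDFReal_nonneg _ _ _)]
    _ ≤ (gaussianReal 0 1).real (Set.Ici s) := measureReal_mono Set.Icc_subset_Ici_self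

section StdGaussian

variable {E : Type*} [NormedAddCommGroup E] [InnerProductSpace ℝ E] [FiniteDimensional ℝ E]
  [MeasurableSpace E] [BorelSpace E]

theorem integral_exp_sum_mul_inner_sq_stdGaussian {ι : Type*} [Fintype ι]
    (b : OrthonormalBasis ι ℝ E) {a : ι → ℝ} (ha : ∀ i, 2 * a i < 1) :
    ∫ g, exp (∑ i, a i * ⟪b i, g⟫ ^ 2) ∂ProbabilityTheory.stdGaussian E =
      ∏ i, (√(1 - 2 * a i))⁻¹ := by
  rw [stdGaussian_eq_map_pi_orthonormalBasis b,
    integral_map (Measurable.aemeasurable (by fun_prop)) (by fun_prop)]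
  simp_rw [b.orthonormal.inner_right_fintype, exp_sum]
  rw [integral_fintype_prod_eq_prod (f := fun i x ↦ exp (a i * x ^ 2))]
  refine Finset.prod_congr rfl fun i _ ↦ ?_
  simpa using integral_exp_mul_sq_gaussianReal (v := 1) (a := a i) (by simpa using ha i)

theorem measureReal_stdGaussian_le_sum_mul_inner_sq_le {ι : Type*} [Fintype ι]
    (b : OrthonormalBasis ι ℝ E) {a : ι → ℝ} (ha : ∀ i, 2 * a i < 1) (c : ℝ) :
    (ProbabilityTheory.stdGaussian E).real {g | c ≤ ∑ i, a i * ⟪b i, g⟫ ^ 2} ≤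
      exp (-c) * ∏ i, (√(1 - 2 * a i))⁻¹ := by
  have hint := integral_exp_sum_mul_inner_sq_stdGaussian b ha
  have hpos : 0 < ∏ i, (√(1 - 2 * a i))⁻¹ :=
    Finset.prod_pos fun i _ ↦ inv_pos.2 (sqrt_pos.2 (sub_pos.2 (ha i)))
  have hchernoff := measure_ge_le_exp_mul_mgf (μ := ProbabilityTheory.stdGaussian E)
    (X := fun g ↦ ∑ i, a i * ⟪b i, g⟫ ^ 2) c zero_le_one
    (by simpa using Integrable.of_integral_ne_zero (hint ▸ hpos.ne'))
  simpa only [mgf, one_mul, neg_mul, hint] using hchernoff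

variable (E) in
theorem measureReal_stdGaussian_two_mul_sqrt_finrank_le_norm_le :
    (ProbabilityTheory.stdGaussian E).real {g | 2 * √(finrank ℝ E) ≤ ‖g‖} ≤
      exp (-(finrank ℝ E : ℝ) / 2) := by
  have hfactor : (√(1 - 2 * (1 / 4)))⁻¹ ≤ exp (1 / 2) := by
    rw [← sqrt_inv, exp_half]
    exact sqrt_le_sqrt (by linarith [add_one_le_exp 1])
  have hset : {g : E | 2 * √(finrank ℝ E) ≤ ‖g‖} ⊆
      {g | (finrank ℝ E : ℝ) ≤ ∑ i, 1 / 4 * ⟪stdOrthonormalBasis ℝ E i, g⟫ ^ 2} := by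
    intro g hg
    rw [Set.mem_ofPred_eq, ← Finset.mul_sum, OrthonormalBasis.sum_sq_inner_right]
    have hsq : (2 * √(finrank ℝ E)) ^ 2 ≤ ‖g‖ ^ 2 :=
      pow_le_pow_left₀ (by positivity) (Set.mem_ofPred.1 hg) 2
    rw [mul_pow, sq_sqrt (by positivity)] at hsq
    linarith
  calc (ProbabilityTheory.stdGaussian E).real {g | 2 * √(finrank ℝ E) ≤ ‖g‖}
    _ ≤ exp (-finrank ℝ E) * ∏ _i : Fin (finrank ℝ E), (√(1 - 2 * (1 / 4)))⁻¹ :=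
        (measureReal_mono hset).trans <|
          measureReal_stdGaussian_le_sum_mul_inner_sq_le _ (fun _ ↦ by norm_num) _
    _ ≤ exp (-finrank ℝ E) * exp (1 / 2) ^ finrank ℝ E := by
        rw [Finset.prod_const, Finset.card_fin]
        gcongr
    _ = exp (-(finrank ℝ E : ℝ) / 2) := by
        rw [← exp_nat_mul, ← exp_add]
        ring_nf

theorem stdGaussian_map_inner {u : E} (hu : ‖u‖ = 1) :
    (ProbabilityTheory.stdGaussian E).map (fun g ↦ ⟪u, g⟫) = gaussianReal 0 1 := by
  have := IsGaussian.map_eq_gaussianReal (μ := ProbabilityTheory.stdGaussian E) (innerSL ℝ u)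
  rw [integral_strongDual_stdGaussian, variance_dual_stdGaussian, innerSL_apply_norm, hu] at this
  simpa using this

theorem exp_sub_exp_le_measureReal_stdGaussian_le_inner_div_norm {u : E} (hu : ‖u‖ = 1) {t : ℝ}
    (ht : 0 < t) :
    exp (-(4 * finrank ℝ E * t ^ 2 + 2)) - exp (-(finrank ℝ E : ℝ) / 2) ≤
      (ProbabilityTheory.stdGaussian E).real {g | t ≤ ⟪u, g⟫ / ‖g‖} := by
  have : Nontrivial E := ⟨u, 0, by rintro rfl; simp at hu⟩
  have hdim : (0 : ℝ) < finrank ℝ E := by exact_mod_cast finrank_pos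
  set s := t * (2 * √(finrank ℝ E)) with hs
  have hs_sq : s ^ 2 = 4 * finrank ℝ E * t ^ 2 := by
    rw [hs, mul_pow, mul_pow, sq_sqrt hdim.le]
    ring
  have hinner : exp (-(s ^ 2 + 2)) ≤ (ProbabilityTheory.stdGaussian E).real {g | s ≤ ⟪u, g⟫} := by
    refine (exp_neg_sq_add_two_le_gaussianReal_Ici s).trans_eq ?_
    rw [← stdGaussian_map_inner hu, map_measureReal_apply (by fun_prop) measurableSet_Ici]
    rfl
  have hcover : {g : E | s ≤ ⟪u, g⟫} ⊆
      {g | t ≤ ⟪u, g⟫ / ‖g‖} ∪ {g | 2 * √(finrank ℝ E) ≤ ‖g‖} := by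
    intro g hg
    refine or_iff_not_imp_right.2 fun hnorm ↦ ?_
    have hg0 : g ≠ 0 := by
      rintro rfl
      have : s ≤ 0 := by simpa using hg
      exact this.not_gt (by positivity)
    refine (le_div_iff₀ (norm_pos_iff.2 hg0)).2 (le_trans ?_ hg)
    exact mul_le_mul_of_nonneg_left (not_le.1 hnorm).le ht.le
  have hunion := (measureReal_mono hcover).trans
    (measureReal_union_le (μ := ProbabilityTheory.stdGaussian E) _ _)
  rw [← hs_sq]
  linarith [measureReal_stdGaussian_two_mul_sqrt_finrank_le_norm_le E]

theorem measureReal_stdGaussian_mul_norm_lt_neg_inner (u : E) (t : ℝ) :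
    (ProbabilityTheory.stdGaussian E).real {g | t * ‖g‖ < -⟪u, g⟫} =
      (ProbabilityTheory.stdGaussian E).real {g | t * ‖g‖ < ⟪u, g⟫} := by
  conv_rhs => rw [← stdGaussian_map (LinearIsometryEquiv.neg ℝ (E := E))]
  rw [map_measureReal_apply (by fun_prop) (measurableSet_lt (by fun_prop) (by fun_prop))]
  simp

theorem two_mul_measureReal_stdGaussian_mul_norm_lt_inner_le (u : E) {t : ℝ} (ht : 0 ≤ t) :
    2 * (ProbabilityTheory.stdGaussian E).real {g | t * ‖g‖ < ⟪u, g⟫} ≤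
      (ProbabilityTheory.stdGaussian E).real {g | t ^ 2 * ‖g‖ ^ 2 ≤ ⟪u, g⟫ ^ 2} := by
  have hsq {g : E} {x : ℝ} (h : t * ‖g‖ < x) : t ^ 2 * ‖g‖ ^ 2 ≤ x ^ 2 :=
    mul_pow t ‖g‖ 2 ▸ pow_le_pow_left₀ (by positivity) h.le 2
  have hdisj : Disjoint {g : E | t * ‖g‖ < ⟪u, g⟫} {g | t * ‖g‖ < -⟪u, g⟫} := by
    refine Set.disjoint_left.2 fun g hpos hneg ↦ ?_
    have : 0 ≤ t * ‖g‖ := by positivity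
    linarith [Set.mem_ofPred.1 hpos, Set.mem_ofPred.1 hneg]
  calc 2 * (ProbabilityTheory.stdGaussian E).real {g | t * ‖g‖ < ⟪u, g⟫}
    _ = (ProbabilityTheory.stdGaussian E).real
        ({g | t * ‖g‖ < ⟪u, g⟫} ∪ {g | t * ‖g‖ < -⟪u, g⟫}) := by
        rw [measureReal_union hdisj (measurableSet_lt (by fun_prop) (by fun_prop)),
          measureReal_stdGaussian_mul_norm_lt_neg_inner, two_mul]
    _ ≤ (ProbabilityTheory.stdGaussian E).real {g | t ^ 2 * ‖g‖ ^ 2 ≤ ⟪u, g⟫ ^ 2} :=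
        measureReal_mono <| Set.union_subset (fun _ hg ↦ Set.mem_ofPred.2 (hsq hg))
          fun _ hg ↦ Set.mem_ofPred.2 ((hsq hg).trans_eq (neg_sq _))

theorem measureReal_stdGaussian_sq_mul_norm_sq_le_inner_sq_le {u : E} (hu : ‖u‖ = 1) {t : ℝ}
    (ht : t ^ 2 ≤ 4) :
    (ProbabilityTheory.stdGaussian E).real {g | t ^ 2 * ‖g‖ ^ 2 ≤ ⟪u, g⟫ ^ 2} ≤
      2 * exp (-(finrank ℝ E * t ^ 2 / 8)) := by
  classical
  obtain ⟨s, b, i, rfl⟩ := exists_orthonormalBasis_apply_eq hu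
  let a (j : s) : ℝ := ((if j = i then 1 else 0) - t ^ 2) / 4
  have hexp : exp (t ^ 2 / 4) ≤ 1 + 2 * (t ^ 2 / 4) :=
    exp_le_one_add_two_mul (by positivity) (by linarith)
  have ha (j : s) : 2 * a j < 1 := by
    dsimp only [a]
    split_ifs <;> linarith [sq_nonneg t]
  have hfactor (j : s) :
      (√(1 - 2 * a j))⁻¹ ≤ (if j = i then 2 else 1) * exp (-(t ^ 2 / 4 / 2)) := by
    dsimp only [a]
    split_ifs <;> refine inv_sqrt_le_mul_exp_neg_half (by norm_num) ?_ <;>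
      linarith [sq_nonneg t]
  have hform (g : E) : ∑ j, a j * ⟪b j, g⟫ ^ 2 = (⟪b i, g⟫ ^ 2 - t ^ 2 * ‖g‖ ^ 2) / 4 := by
    simp only [a, div_mul_eq_mul_div, sub_mul, ite_mul, one_mul, zero_mul, ← Finset.sum_div,
      Finset.sum_sub_distrib, Finset.sum_ite_eq', Finset.mem_univ, if_true, ← Finset.mul_sum,
      b.sum_sq_inner_right]
  calc (ProbabilityTheory.stdGaussian E).real {g | t ^ 2 * ‖g‖ ^ 2 ≤ ⟪b i, g⟫ ^ 2}
    _ = (ProbabilityTheory.stdGaussian E).real {g | 0 ≤ ∑ j, a j * ⟪b j, g⟫ ^ 2} := by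
        simp only [hform, le_div_iff₀ (zero_lt_four' ℝ), zero_mul, sub_nonneg]
    _ ≤ ∏ j, (√(1 - 2 * a j))⁻¹ := by
        simpa using measureReal_stdGaussian_le_sum_mul_inner_sq_le b ha 0
    _ ≤ ∏ j, (if j = i then 2 else 1) * exp (-(t ^ 2 / 4 / 2)) :=
        Finset.prod_le_prod (fun j _ ↦ by positivity) fun j _ ↦ hfactor j
    _ = 2 * exp (-(finrank ℝ E * t ^ 2 / 8)) := by
        rw [Finset.prod_mul_distrib, Finset.prod_ite_eq', if_pos (Finset.mem_univ i),
          Finset.prod_const, Finset.card_univ, ← exp_nat_mul,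
          ← finrank_eq_card_basis b.toBasis]
        ring_nf

theorem measureReal_stdGaussian_lt_inner_div_norm_le {u : E} (hu : ‖u‖ = 1) {t : ℝ}
    (ht : 0 ≤ t) :
    (ProbabilityTheory.stdGaussian E).real {g | t < ⟪u, g⟫ / ‖g‖} ≤
      exp (-(finrank ℝ E * t ^ 2 / 8)) := by
  obtain ht1 | ht1 := le_total t 1
  · have hsub : {g : E | t < ⟪u, g⟫ / ‖g‖} ⊆ {g | t * ‖g‖ < ⟪u, g⟫} := by
      intro g hg
      refine (lt_div_iff₀ ((norm_nonneg g).lt_of_ne' fun h0 ↦ ?_)).1 hg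
      rw [Set.mem_ofPred_eq, h0, div_zero] at hg
      exact ht.not_gt hg
    linarith [measureReal_mono (μ := ProbabilityTheory.stdGaussian E) hsub,
      two_mul_measureReal_stdGaussian_mul_norm_lt_inner_le u ht,
      measureReal_stdGaussian_sq_mul_norm_sq_le_inner_sq_le hu (t := t) (by nlinarith)]
  · have hempty : {g : E | t < ⟪u, g⟫ / ‖g‖} = ∅ := by
      refine Set.eq_empty_of_forall_notMem fun g ↦ not_lt.2 (le_trans ?_ ht1)
      exact div_le_one_of_le₀ (by simpa [hu] using real_inner_le_norm u g) (norm_nonneg g)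
    rw [hempty, measureReal_empty]
    positivity

end StdGaussian

section Coordinates

variable {d : ℕ}

theorem measureReal_stdGaussian_preimage_toLp (s : Set (EuclideanSpace ℝ (Fin d))) :
    (_root_.stdGaussian d).real (WithLp.toLp 2 ⁻¹' s) =
      (ProbabilityTheory.stdGaussian (EuclideanSpace ℝ (Fin d))).real s := by
  rw [← map_pi_eq_stdGaussian, measureReal_def, measureReal_def]
  exact congrArg _ ((MeasurableEquiv.toLp 2 (Fin d → ℝ)).map_apply s).symm

theorem e2norm_eq_norm_toLp (v : Fin d → ℝ) : e2norm v = ‖WithLp.toLp 2 v‖ := by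
  simp [e2norm, EuclideanSpace.norm_eq]

theorem sum_inv_e2norm_mul_mul_eq (g w : Fin d → ℝ) :
    ∑ i, (e2norm g)⁻¹ * g i * w i =
      ⟪WithLp.toLp 2 w, WithLp.toLp 2 g⟫ / ‖WithLp.toLp 2 g‖ := by
  simp only [e2norm_eq_norm_toLp, mul_assoc, ← Finset.mul_sum, div_eq_inv_mul, PiLp.inner_apply,
    RCLike.inner_apply, conj_trivial]

theorem exp_sub_exp_le_measureReal_stdGaussian_le_sum {w : Fin d → ℝ} (hw : e2norm w = 1) {t : ℝ}
    (ht : 0 < t) :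
    exp (-(4 * d * t ^ 2 + 2)) - exp (-(d : ℝ) / 2) ≤
      (_root_.stdGaussian d).real {g | t ≤ ∑ i, (e2norm g)⁻¹ * g i * w i} := by
  simp only [sum_inv_e2norm_mul_mul_eq]
  have h := exp_sub_exp_le_measureReal_stdGaussian_le_inner_div_norm
    ((e2norm_eq_norm_toLp w).symm.trans hw) ht
  rwa [finrank_euclideanSpace_fin, ← measureReal_stdGaussian_preimage_toLp] at h

theorem one_sub_exp_le_measureReal_stdGaussian_sum_le {w : Fin d → ℝ} (hw : e2norm w = 1) {t : ℝ}
    (ht : 0 ≤ t) :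
    1 - exp (-(d * t ^ 2 / 8)) ≤
      (_root_.stdGaussian d).real {g | ∑ i, (e2norm g)⁻¹ * g i * w i ≤ t} := by
  simp only [sum_inv_e2norm_mul_mul_eq]
  have h := measureReal_stdGaussian_lt_inner_div_norm_le
    ((e2norm_eq_norm_toLp w).symm.trans hw) ht
  have hcompl : {g : EuclideanSpace ℝ (Fin d) | t < ⟪WithLp.toLp 2 w, g⟫ / ‖g‖} =
      {g | ⟪WithLp.toLp 2 w, g⟫ / ‖g‖ ≤ t}ᶜ := by
    ext
    simp
  rw [finrank_euclideanSpace_fin, hcompl,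
    probReal_compl_eq_one_sub (measurableSet_le (by fun_prop) (by fun_prop)),
    ← measureReal_stdGaussian_preimage_toLp] at h
  exact sub_le_comm.1 h

end Coordinates

theorem natCast_mul_mul_rpow_neg_sq {d : ℕ} (hd : 0 < d) (α γ : ℝ) :
    d * (α * (d : ℝ) ^ (-γ)) ^ 2 = α ^ 2 * (d : ℝ) ^ (1 - 2 * γ) := by
  have hd' : (0 : ℝ) < d := by exact_mod_cast hd
  rw [show 1 - 2 * γ = 1 + -γ + -γ by ring, rpow_add hd', rpow_add hd', rpow_one]
  ring

theorem eventually_mul_rpow_one_sub_le {δ : ℝ} (hδ : 0 < δ) (C : ℝ) :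
    ∀ᶠ x : ℝ in atTop, C * x ^ (1 - δ) ≤ x := by
  filter_upwards [(tendsto_rpow_atTop hδ).eventually_ge_atTop C, eventually_gt_atTop 0] with x hC hx
  calc C * x ^ (1 - δ) ≤ x ^ δ * x ^ (1 - δ) := by gcongr
    _ = x := by rw [← rpow_add hx, add_sub_cancel, rpow_one]

theorem stmt7_general (γ : ℝ) :
    (0 < γ → γ ≤ 1 / 2 → ∀ α : ℝ, 0 < α → ∃ (β : ℝ) (d₀ : ℕ), 0 < β ∧
      ∀ d : ℕ, d₀ ≤ d → ∀ w : Fin d → ℝ, e2norm w = 1 →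
        ENNReal.ofReal (exp (-β * (d : ℝ) ^ (1 - 2 * γ))) ≤
          stdGaussian d {g | α * (d : ℝ) ^ (-γ) ≤ ∑ i, (e2norm g)⁻¹ * g i * w i}) ∧
    (∀ α : ℝ, 0 < α → ∃ (β' : ℝ) (d₀' : ℕ), 0 < β' ∧
      ∀ d : ℕ, d₀' ≤ d → ∀ w : Fin d → ℝ, e2norm w = 1 →
        ENNReal.ofReal (1 - exp (-β' * (d : ℝ) ^ (1 - 2 * γ))) ≤
          stdGaussian d {g | ∑ i, (e2norm g)⁻¹ * g i * w i ≤ α * (d : ℝ) ^ (-γ)}) := by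
  constructor
  · intro hγ0 hγ α hα
    obtain ⟨d₀, hd₀⟩ := eventually_atTop.1 <| tendsto_natCast_atTop_atTop.eventually <|
      eventually_mul_rpow_one_sub_le (mul_pos two_pos hγ0) (2 * (4 * α ^ 2 + 3))
    refine ⟨4 * α ^ 2 + 3, max d₀ 1, by positivity, fun d hd w hw ↦ ?_⟩
    obtain ⟨hd₀d, hd1⟩ := max_le_iff.1 hd
    have hd_pos : (0 : ℝ) < d := by exact_mod_cast hd1
    have hrate : 1 ≤ (d : ℝ) ^ (1 - 2 * γ) := one_le_rpow (by exact_mod_cast hd1) (by linarith)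
    have htail := exp_sub_exp_le_measureReal_stdGaussian_le_sum hw
      (mul_pos hα (rpow_pos_of_pos hd_pos (-γ)))
    rw [mul_assoc, natCast_mul_mul_rpow_neg_sq hd1] at htail
    have hnorm : exp (-(d : ℝ) / 2) ≤ exp (-(4 * α ^ 2 + 3) * (d : ℝ) ^ (1 - 2 * γ)) :=
      exp_le_exp.2 (by linarith [hd₀ d hd₀d])
    have hmain := two_mul_exp_le_exp (x := -(4 * α ^ 2 + 3) * (d : ℝ) ^ (1 - 2 * γ))
      (y := -(4 * (α ^ 2 * (d : ℝ) ^ (1 - 2 * γ)) + 2)) (by linarith)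
    exact ENNReal.ofReal_le_of_le_toReal (le_trans (by linarith) htail)
  · intro α hα
    refine ⟨α ^ 2 / 8, 1, by positivity, fun d hd w hw ↦ ?_⟩
    have htail := one_sub_exp_le_measureReal_stdGaussian_sum_le hw
      (t := α * (d : ℝ) ^ (-γ)) (by positivity)
    rw [natCast_mul_mul_rpow_neg_sq hd, mul_div_right_comm, ← neg_mul] at htail
    exact ENNReal.ofReal_le_of_le_toReal htail

/-- Correlation of a random unit vector `v = g/‖g‖` with a fixed unit vector `w`: for any
fixed `0 < γ < 1/2`, (i) for every `α > 0` there are `β > 0` and `d₀` such that for all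
`d ≥ d₀`, `Pr[⟨v,w⟩ ≥ α·d^(−γ)] ≥ e^{−β·d^(1−2γ)}`; and (ii) for every `α > 0` there are
`β' > 0` and `d₀'` with `Pr[⟨v,w⟩ ≤ α·d^(−γ)] ≥ 1 − e^{−β'·d^(1−2γ)}`. -/
theorem stmt7 (γ : ℝ) (hγ0 : 0 < γ) (hγ : γ < 1 / 2) :
    (∀ α : ℝ, 0 < α → ∃ (β : ℝ) (d₀ : ℕ), 0 < β ∧
      ∀ d : ℕ, d₀ ≤ d → ∀ w : Fin d → ℝ, e2norm w = 1 →
        ENNReal.ofReal (Real.exp (-β * (d : ℝ) ^ ((1 : ℝ) - 2 * γ))) ≤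
          stdGaussian d {g | α * (d : ℝ) ^ (-γ) ≤ ∑ i, (e2norm g)⁻¹ * g i * w i}) ∧
    (∀ α : ℝ, 0 < α → ∃ (β' : ℝ) (d₀' : ℕ), 0 < β' ∧
      ∀ d : ℕ, d₀' ≤ d → ∀ w : Fin d → ℝ, e2norm w = 1 →
        ENNReal.ofReal (1 - Real.exp (-β' * (d : ℝ) ^ ((1 : ℝ) - 2 * γ))) ≤
          stdGaussian d {g | ∑ i, (e2norm g)⁻¹ * g i * w i ≤ α * (d : ℝ) ^ (-γ)}) :=
  ⟨(stmt7_general γ).1 hγ0 hγ.le, (stmt7_general γ).2⟩
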